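/- For every positive integer k, the packing chromatic number of G_k is at least 2k+9; that is, G_k admits no m-packing coloring for any m ≤ 2k+8. -/

import Mathlib

/-- `W` is an `i`-packing in `G`: any two distinct vertices of `W` are at
graph distance greater than `i` in `G`. -/
def IsPacking {V : Type*} (G : SimpleGraph V) (i : ℕ) (W : Set V) : Prop :=
  ∀ u ∈ W, ∀ v ∈ W, u ≠ v → i < G.dist u v

/-- `c` is a `k`-packing coloring of `G`: every color lies in `{1, …, k}` and
for each `i ∈ {1, …, k}` the color class `c⁻¹(i)` is an `i`-packing. -/
def IsPackingColoring {V : Type*} (G : SimpleGraph V) (k : ℕ) (c : V → ℕ) : Prop :=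
  (∀ v, 1 ≤ c v ∧ c v ≤ k) ∧ ∀ i, 1 ≤ i → i ≤ k → IsPacking G i {v | c v = i}

/-- The packing chromatic number: the least `k` admitting a `k`-packing coloring. -/
noncomputable def packingChromaticNumber {V : Type*} (G : SimpleGraph V) : ℕ :=
  sInf {k | ∃ c : V → ℕ, IsPackingColoring G k c}


/-- Edges of `H`; vertices `y1,…,y7` are `0,…,6`, `z1,…,z7` are `7,…,13`,
and `w` is `14`. -/
def Hedges : List (Fin 15 × Fin 15) :=
  [(0,1),(1,2),(2,6),(6,5),(5,4),(4,0),(1,3),(3,5),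
   (7,8),(8,9),(9,13),(13,12),(12,11),(11,7),(8,10),(10,12),
   (3,14),(14,10),(2,7),(4,13)]

/-- The graph `H`. -/
def Hgraph : SimpleGraph (Fin 15) :=
  SimpleGraph.fromRel (fun u v => (u, v) ∈ Hedges)

/-- Glue two disjoint copies of `G` together with five new vertices
`Sum.inr (Sum.inr i)` for `i : Fin 5`: the `i`-th new vertex is adjacent
exactly to `p i` in the first copy and to `q i` in the second copy. -/
def glue {V : Type*} (G : SimpleGraph V) (p q : Fin 5 → V) :
    SimpleGraph (V ⊕ V ⊕ Fin 5) :=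
  SimpleGraph.fromRel (fun u v =>
    match u, v with
    | Sum.inl a, Sum.inl b => G.Adj a b
    | Sum.inr (Sum.inl a), Sum.inr (Sum.inl b) => G.Adj a b
    | Sum.inr (Sum.inr i), Sum.inl a => a = p i
    | Sum.inr (Sum.inr i), Sum.inr (Sum.inl b) => b = q i
    | _, _ => False)

/-- Attachment points of `a,b,c,d,x` in the first copy (`H'`):
`a ↦ y5`, `b ↦ z7`, `c ↦ y3`, `d ↦ z1`, `x ↦ w`. -/
def pH : Fin 5 → Fin 15 := ![4, 13, 2, 7, 14]

/-- Attachment points of `a,b,c,d,x` in the second copy (`H''`):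
`a ↦ y1`, `b ↦ z3`, `c ↦ z5`, `d ↦ y7`, `x ↦ w`. -/
def qH : Fin 5 → Fin 15 := ![0, 9, 11, 6, 14]

/-- The graph `G₀`: two disjoint copies of `H` plus the five vertices
`a,b,c,d,x`, which are `Sum.inr (Sum.inr 0), …, Sum.inr (Sum.inr 4)`. -/
def G₀ : SimpleGraph (Fin 15 ⊕ Fin 15 ⊕ Fin 5) := glue Hgraph pH qH

/-- The vertex type of `G_k`. -/
def Vt : ℕ → Type
  | 0 => Fin 15 ⊕ Fin 15 ⊕ Fin 5
  | k + 1 => Vt k ⊕ Vt k ⊕ Fin 5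

/-- The five distinguished vertices `a,b,c,d,x` of `G_k`. -/
def distV : (k : ℕ) → Fin 5 → Vt k
  | 0, i => Sum.inr (Sum.inr i)
  | _ + 1, i => Sum.inr (Sum.inr i)

/-- The graph `G_k`: for `k ≥ 1` it is obtained from two disjoint copies of
`G_{k-1}` by adding five new vertices, the `i`-th of which is adjacent exactly
to the `i`-th distinguished vertex of each of the two copies. -/
def Gk : (k : ℕ) → SimpleGraph (Vt k)
  | 0 => G₀
  | k + 1 => glue (Gk k) (distV k) (distV k)


/-- There is a walk of length at most `n`. -/
def Near {V : Type*} (G : SimpleGraph V) (n : ℕ) (u v : V) : Prop :=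
  ∃ p : G.Walk u v, p.length ≤ n

/-- Unbounded packing colorings, in terms of walks. -/
def PC {V : Type*} (G : SimpleGraph V) (c : V → ℕ) : Prop :=
  (∀ v, 1 ≤ c v) ∧ ∀ u v, u ≠ v → c u = c v → ¬ Near G (c u) u v

theorem Near.trans {V : Type*} {G : SimpleGraph V} {a b : ℕ} {u v w : V}
    (h1 : Near G a u v) (h2 : Near G b v w) : Near G (a + b) u w := by
  obtain ⟨p, hp⟩ := h1
  obtain ⟨q, hq⟩ := h2
  exact ⟨p.append q, by rw [SimpleGraph.Walk.length_append]; omega⟩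

theorem Near.symm {V : Type*} {G : SimpleGraph V} {a : ℕ} {u v : V}
    (h1 : Near G a u v) : Near G a v u := by
  obtain ⟨p, hp⟩ := h1
  exact ⟨p.reverse, by simpa using hp⟩

theorem Near.mono {V : Type*} {G : SimpleGraph V} {a b : ℕ} {u v : V}
    (h1 : Near G a u v) (h : a ≤ b) : Near G b u v := by
  obtain ⟨p, hp⟩ := h1
  exact ⟨p, hp.trans h⟩

theorem Near.refl {V : Type*} {G : SimpleGraph V} (u : V) : Near G 0 u u :=
  ⟨SimpleGraph.Walk.nil, by simp⟩

theorem Near.of_adj {V : Type*} {G : SimpleGraph V} {u v : V} (h : G.Adj u v) :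
    Near G 1 u v := ⟨SimpleGraph.Walk.cons h SimpleGraph.Walk.nil, by simp⟩

theorem Near.map {V W : Type*} {G : SimpleGraph V} {G' : SimpleGraph W} (f : G →g G')
    {a : ℕ} {u v : V} (h1 : Near G a u v) : Near G' a (f u) (f v) := by
  obtain ⟨p, hp⟩ := h1
  exact ⟨p.map f, by simpa using hp⟩

theorem PC.comp {V W : Type*} {G : SimpleGraph V} {G' : SimpleGraph W} (f : G →g G')
    (hf : Function.Injective f) {c : W → ℕ} (h : PC G' c) : PC G (fun v => c (f v)) :=
  ⟨fun v => h.1 _, fun u v huv hc hn => h.2 _ _ (hf.ne huv) hc (hn.map f)⟩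

theorem PC.of_coloring {V : Type*} {G : SimpleGraph V} {m : ℕ} {c : V → ℕ}
    (h : IsPackingColoring G m c) : PC G c := by
  refine ⟨fun v => (h.1 v).1, fun u v huv hc ⟨p, hp⟩ => ?_⟩
  have h1 := h.2 (c u) (h.1 u).1 (h.1 u).2 u rfl v hc.symm huv
  have h2 := SimpleGraph.dist_le p
  omega

/-- Colors that are at least the diameter are used at most once. -/
theorem peel {V : Type*} {G : SimpleGraph V} {c : V → ℕ} (h : PC G c) {m n : ℕ}
    (hd : ∀ u v, u ≠ v → Near G m u v) (S : Finset V) (hS : ∀ v ∈ S, m ≤ c v)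
    (hc : n + 2 ≤ S.card) : ∃ T : Finset V, n ≤ T.card ∧ ∀ v ∈ T, m + 2 ≤ c v := by
  classical
  have h1 : ∀ t, m ≤ t → (S.filter (fun v => c v = t)).card ≤ 1 := by
    intro t ht
    rw [Finset.card_le_one]
    intro a ha b hb
    by_contra hab
    simp only [Finset.mem_filter] at ha hb
    exact h.2 a b hab (ha.2.trans hb.2.symm) ((hd a b hab).mono (by omega))
  refine ⟨S.filter (fun v => m + 2 ≤ c v), ?_, fun v hv => (Finset.mem_filter.1 hv).2⟩
  have hsub : S ⊆ S.filter (fun v => m + 2 ≤ c v) ∪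
      (S.filter (fun v => c v = m) ∪ S.filter (fun v => c v = m + 1)) := by
    intro v hv
    have := hS v hv
    simp only [Finset.mem_union, Finset.mem_filter, hv, true_and]
    omega
  have h2 := Finset.card_le_card hsub
  have h3 := Finset.card_union_le (S.filter (fun v => m + 2 ≤ c v))
    (S.filter (fun v => c v = m) ∪ S.filter (fun v => c v = m + 1))
  have h4 := Finset.card_union_le (S.filter (fun v => c v = m)) (S.filter (fun v => c v = m + 1))
  have h5 := h1 m le_rfl
  have h6 := h1 (m + 1) (by omega)
  omega

def hom1 {V : Type*} (G : SimpleGraph V) (p q : Fin 5 → V) : G →g glue G p q where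
  toFun := Sum.inl
  map_rel' := by
    intro a b h
    simp [glue, h, h.ne]

def hom2 {V : Type*} (G : SimpleGraph V) (p q : Fin 5 → V) : G →g glue G p q where
  toFun := fun v => Sum.inr (Sum.inl v)
  map_rel' := by
    intro a b h
    simp [glue, h, h.ne]

theorem adj1 {V : Type*} (G : SimpleGraph V) (p q : Fin 5 → V) (i : Fin 5) :
    (glue G p q).Adj (Sum.inl (p i)) (Sum.inr (Sum.inr i)) := by
  simp [glue]

theorem adj2 {V : Type*} (G : SimpleGraph V) (p q : Fin 5 → V) (i : Fin 5) :
    (glue G p q).Adj (Sum.inr (Sum.inl (q i))) (Sum.inr (Sum.inr i)) := by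
  simp [glue]

theorem glue_count {V : Type*} (G : SimpleGraph V) (p q : Fin 5 → V) (m : ℕ)
    (H : ∀ c, PC G c → ∃ S : Finset V, 4 ≤ S.card ∧ ∀ v ∈ S, m ≤ c v)
    (hd : ∀ u v, u ≠ v → Near G m u v) (c : V ⊕ V ⊕ Fin 5 → ℕ) (hc : PC (glue G p q) c) :
    ∃ S : Finset (V ⊕ V ⊕ Fin 5), 4 ≤ S.card ∧ ∀ v ∈ S, m + 2 ≤ c v := by
  classical
  have hc1 := PC.comp (hom1 G p q) Sum.inl_injective hc
  have hc2 := PC.comp (hom2 G p q) (Sum.inr_injective.comp Sum.inl_injective) hc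
  obtain ⟨S1, h1, h1'⟩ := H _ hc1
  obtain ⟨S2, h2, h2'⟩ := H _ hc2
  obtain ⟨T1, k1, k1'⟩ := peel hc1 hd (n := 2) S1 h1' h1
  obtain ⟨T2, k2, k2'⟩ := peel hc2 hd (n := 2) S2 h2' h2
  refine ⟨T1.image Sum.inl ∪ T2.image (fun v => Sum.inr (Sum.inl v)), ?_, ?_⟩
  · rw [Finset.card_union_of_disjoint, Finset.card_image_of_injective _ Sum.inl_injective,
      Finset.card_image_of_injective T2 (f := fun v => Sum.inr (Sum.inl v))
        (Sum.inr_injective.comp Sum.inl_injective)]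
    · omega
    · rw [Finset.disjoint_left]
      intro x hx hy
      simp only [Finset.mem_image] at hx hy
      obtain ⟨a, -, rfl⟩ := hx
      obtain ⟨b, -, hb⟩ := hy
      cases hb
  · intro v hv
    simp only [Finset.mem_union, Finset.mem_image] at hv
    rcases hv with ⟨a, ha, rfl⟩ | ⟨a, ha, rfl⟩
    · exact k1' a ha
    · exact k2' a ha

/-! The graph `H`. -/

instance decH : DecidableRel Hgraph.Adj := fun a b =>
  decidable_of_iff (a ≠ b ∧ ((a, b) ∈ Hedges ∨ (b, a) ∈ Hedges)) (by simp [Hgraph])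

/-- Punctured balls of radius 1, 2, 3 and at least 4 in `H`, as bit masks. -/
def tabM : ℕ → List ℕ
  | 0 => []
  | 1 => [18, 13, 194, 16418, 8225, 88, 36, 2308, 1664, 8448, 20736, 4224, 11264, 4624, 1032]
  | 2 => [8254, 16637, 2539, 17527, 12907, 24671, 190, 8006, 32388, 13712, 31624, 13700,
      28560, 7985, 5418]
  | 3 => [29438, 28157, 24571, 30199, 32623, 30431, 27071, 32623, 32478, 32181, 31678, 30678,
      28605, 24571, 16383]
  | _ => (List.range 15).map (fun i => 32767 - 2 ^ i)

def tab (x v j : ℕ) : Bool := Nat.testBit ((tabM x).getD v 0) j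

theorem tab_one : ∀ u v : Fin 15, tab 1 u v = true → Hgraph.Adj u v := by decide +kernel

theorem tab_two : ∀ u v : Fin 15, tab 2 u v = true →
    tab 1 u v = true ∨ ∃ w, Hgraph.Adj u w ∧ tab 1 w v = true := by decide +kernel

theorem tab_three : ∀ u v : Fin 15, tab 3 u v = true →
    tab 2 u v = true ∨ ∃ w, Hgraph.Adj u w ∧ tab 2 w v = true := by decide +kernel

theorem tab_four : ∀ u v : Fin 15, u ≠ v →
    tab 3 u v = true ∨ ∃ w, Hgraph.Adj u w ∧ tab 3 w v = true := by decide +kernel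

theorem near_one (u v : Fin 15) (h : tab 1 u v = true) : Near Hgraph 1 u v :=
  Near.of_adj (tab_one u v h)

theorem near_two (u v : Fin 15) (h : tab 2 u v = true) : Near Hgraph 2 u v := by
  rcases tab_two u v h with h | ⟨w, h1, h2⟩
  · exact (near_one u v h).mono (by omega)
  · exact ((Near.of_adj h1).trans (near_one w v h2)).mono (by omega)

theorem near_three (u v : Fin 15) (h : tab 3 u v = true) : Near Hgraph 3 u v := by
  rcases tab_three u v h with h | ⟨w, h1, h2⟩
  · exact (near_two u v h).mono (by omega)
  · exact ((Near.of_adj h1).trans (near_two w v h2)).mono (by omega)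

theorem near_four (u v : Fin 15) (h : u ≠ v) : Near Hgraph 4 u v := by
  rcases tab_four u v h with h | ⟨w, h1, h2⟩
  · exact (near_three u v h).mono (by omega)
  · exact ((Near.of_adj h1).trans (near_three w v h2)).mono (by omega)

/-- Does color `x` at `v` clash with the colors in the list (of vertices `j, j+1, …`)? -/
def clash (x v : ℕ) : ℕ → List ℕ → Bool
  | _, [] => false
  | j, a :: t => (a == x && tab x v j) || clash x v (j + 1) t

/-- `true` certifies that there is no partial coloring extending the list with at most `b` further
uncolored vertices. -/
def srch : ℕ → List ℕ → ℕ → Bool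
  | 0, _, _ => false
  | f + 1, l, b =>
    (b == 0 || srch f (0 :: l) (b - 1)) &&
    ((clash 1 f (f + 1) l || srch f (1 :: l) b) &&
    ((clash 2 f (f + 1) l || srch f (2 :: l) b) &&
     (clash 3 f (f + 1) l || srch f (3 :: l) b)))

theorem srch_true : srch 15 [] 3 = true := by decide +kernel

theorem clash_sound (g : ℕ → ℕ) (x v : ℕ) : ∀ (n j : ℕ),
    clash x v j ((List.range' j n).map g) = true →
    ∃ i, j ≤ i ∧ i < j + n ∧ g i = x ∧ tab x v i = true := by
  intro n
  induction n with
  | zero => intro j h; simp [clash] at h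
  | succ n ih =>
    intro j h
    rw [List.range'_succ, List.map_cons, clash, Bool.or_eq_true, Bool.and_eq_true, beq_iff_eq] at h
    rcases h with h | h
    · exact ⟨j, le_rfl, by omega, h.1, h.2⟩
    · obtain ⟨i, h1, h2, h3⟩ := ih _ h
      exact ⟨i, by omega, by omega, h3⟩

theorem srch_sound (g : ℕ → ℕ) (hg : ∀ n, g n ≤ 3)
    (hcl : ∀ u v, u < v → v < 15 → g u = g v → 1 ≤ g u → tab (g u) u v = false) :
    ∀ f b, f ≤ 15 → srch f ((List.range' f (15 - f)).map g) b = true →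
      b < ((Finset.range f).filter (fun n => g n = 0)).card := by
  intro f
  induction f with
  | zero => intro b _ h; simp [srch] at h
  | succ f ih =>
    intro b hf h
    have hl : ∀ x, g f = x → x :: (List.range' (f + 1) (15 - (f + 1))).map g =
        (List.range' f (15 - f)).map g := by
      intro x hx
      have : 15 - f = (15 - (f + 1)) + 1 := by omega
      rw [this, List.range'_succ, List.map_cons, hx]
    have hnc : ∀ x, 1 ≤ x → g f = x →
        clash x f (f + 1) ((List.range' (f + 1) (15 - (f + 1))).map g) = false := by
      intro x hx hgx
      by_contra hne
      rw [Bool.not_eq_false] at hne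
      obtain ⟨i, h1, h2, h3, h4⟩ := clash_sound g x f _ _ hne
      have := hcl f i (by omega) (by omega) (by omega) (by omega)
      rw [hgx, h4] at this
      exact absurd this (by decide)
    rw [Finset.range_add_one, Finset.filter_insert]
    rw [srch, Bool.and_eq_true, Bool.and_eq_true, Bool.and_eq_true, Bool.or_eq_true,
      Bool.or_eq_true, Bool.or_eq_true, Bool.or_eq_true] at h
    obtain ⟨h0, h1, h2, h3⟩ := h
    have := hg f
    have hcase : g f = 0 ∨ g f = 1 ∨ g f = 2 ∨ g f = 3 := by omega
    rcases hcase with e | e | e | e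
    · rw [if_pos e, Finset.card_insert_of_notMem (by simp)]
      cases b with
      | zero => omega
      | succ b =>
        have h0' : srch f (0 :: (List.range' (f + 1) (15 - (f + 1))).map g) b = true := by
          simpa using h0
        rw [hl 0 e] at h0'
        have := ih b (by omega) h0'
        omega
    · rw [hnc 1 le_rfl e, hl 1 e] at h1
      rw [if_neg (by omega)]
      exact ih b (by omega) (by simpa using h1)
    · rw [hnc 2 (by omega) e, hl 2 e] at h2
      rw [if_neg (by omega)]
      exact ih b (by omega) (by simpa using h2)
    · rw [hnc 3 (by omega) e, hl 3 e] at h3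
      rw [if_neg (by omega)]
      exact ih b (by omega) (by simpa using h3)

theorem H_count (c : Fin 15 → ℕ) (hc : PC Hgraph c) :
    ∃ S : Finset (Fin 15), 4 ≤ S.card ∧ ∀ v ∈ S, 4 ≤ c v := by
  classical
  let g : ℕ → ℕ := fun n => if h : n < 15 then (if c ⟨n, h⟩ ≤ 3 then c ⟨n, h⟩ else 0) else 0
  have hg : ∀ n, g n ≤ 3 := by
    intro n
    simp only [g]
    split_ifs <;> omega
  have hgv : ∀ n (h : n < 15), 1 ≤ g n → g n = c ⟨n, h⟩ := by
    intro n h h1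
    simp only [g, dif_pos h] at h1 ⊢
    split_ifs at h1 ⊢ <;> omega
  have hcl : ∀ u v, u < v → v < 15 → g u = g v → 1 ≤ g u → tab (g u) u v = false := by
    intro u v huv hv he h1
    by_contra hne
    rw [Bool.not_eq_false] at hne
    have hu : u < 15 := by omega
    have e1 := hgv u hu h1
    have e2 := hgv v hv (by omega)
    have h3 := hg u
    refine hc.2 ⟨u, hu⟩ ⟨v, hv⟩ (by simp; omega) (by omega) ?_
    rw [← e1]
    have hcase : g u = 1 ∨ g u = 2 ∨ g u = 3 := by omega
    rcases hcase with e | e | e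
    · rw [e] at hne ⊢; exact near_one ⟨u, hu⟩ ⟨v, hv⟩ hne
    · rw [e] at hne ⊢; exact near_two ⟨u, hu⟩ ⟨v, hv⟩ hne
    · rw [e] at hne ⊢; exact near_three ⟨u, hu⟩ ⟨v, hv⟩ hne
  have key := srch_sound g hg hcl 15 3 le_rfl srch_true
  refine ⟨Finset.univ.filter (fun v => 4 ≤ c v), ?_, fun v hv => (Finset.mem_filter.1 hv).2⟩
  have hsub : (Finset.range 15).filter (fun n => g n = 0) ⊆
      (Finset.univ.filter (fun v : Fin 15 => 4 ≤ c v)).image (fun v : Fin 15 => (v : ℕ)) := by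
    intro n hn
    simp only [Finset.mem_filter, Finset.mem_range] at hn
    obtain ⟨hn, h0⟩ := hn
    simp only [Finset.mem_image, Finset.mem_filter, Finset.mem_univ, true_and]
    refine ⟨⟨n, hn⟩, ?_, rfl⟩
    have := hc.1 ⟨n, hn⟩
    simp only [g, dif_pos hn] at h0
    split_ifs at h0 <;> omega
  have h2 := Finset.card_le_card hsub
  have h3 := Finset.card_image_le (s := Finset.univ.filter (fun v : Fin 15 => 4 ≤ c v))
    (f := fun v : Fin 15 => (v : ℕ))
  omega

/-! Distances in `G₀`. -/

def dA : List (List ℕ) :=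
  [[2, 3, 4, 3, 1, 2, 3, 5, 4, 3, 4, 4, 3, 2, 4], [3, 4, 5, 4, 2, 3, 4, 4, 3, 2, 3, 3, 2, 1, 4],
   [3, 2, 1, 3, 4, 3, 2, 2, 3, 4, 4, 3, 4, 5, 4], [4, 3, 2, 4, 5, 4, 3, 1, 2, 3, 3, 2, 3, 4, 4],
   [4, 3, 4, 2, 4, 3, 4, 4, 3, 4, 2, 4, 3, 4, 1]]

def dB : List (List ℕ) :=
  [[1, 2, 3, 3, 2, 3, 4, 4, 5, 4, 5, 5, 4, 3, 4], [4, 5, 4, 5, 3, 4, 5, 3, 2, 1, 3, 4, 3, 2, 4],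
   [5, 4, 3, 5, 4, 5, 4, 2, 3, 4, 3, 1, 2, 3, 4], [4, 3, 2, 3, 3, 2, 1, 3, 4, 5, 5, 4, 5, 4, 4],
   [4, 3, 4, 2, 4, 3, 4, 4, 3, 4, 2, 4, 3, 4, 1]]

def dC : List (List ℕ) :=
  [[0, 3, 5, 5, 5], [3, 0, 5, 5, 5], [5, 5, 0, 3, 5], [5, 5, 3, 0, 5], [5, 5, 5, 5, 0]]

def look (l : List (List ℕ)) (i j : ℕ) : ℕ := (l.getD i []).getD j 0

/-- Distance in `G₀` to the distinguished vertex `i`. -/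
def dz (i : Fin 5) : Fin 15 ⊕ Fin 15 ⊕ Fin 5 → ℕ
  | Sum.inl a => look dA i a
  | Sum.inr (Sum.inl a) => look dB i a
  | Sum.inr (Sum.inr j) => look dC i j

theorem descA : ∀ (i : Fin 5) (a : Fin 15),
    (∃ b, Hgraph.Adj a b ∧ look dA i b < look dA i a) ∨
    (∃ j, a = pH j ∧ look dC i j < look dA i a) := by decide +kernel

theorem descB : ∀ (i : Fin 5) (a : Fin 15),
    (∃ b, Hgraph.Adj a b ∧ look dB i b < look dB i a) ∨
    (∃ j, a = qH j ∧ look dC i j < look dB i a) := by decide +kernel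

theorem descC : ∀ (i j : Fin 5), j = i ∨
    (look dA i (pH j) < look dC i j) ∨ (look dB i (qH j) < look dC i j) := by decide +kernel

theorem near_dz (i : Fin 5) : ∀ (n : ℕ) (v : Fin 15 ⊕ Fin 15 ⊕ Fin 5), dz i v ≤ n →
    Near G₀ (dz i v) v (Sum.inr (Sum.inr i)) := by
  intro n
  induction n using Nat.strong_induction_on with
  | _ n ih =>
  have step : ∀ v w : Fin 15 ⊕ Fin 15 ⊕ Fin 5, dz i v ≤ n → G₀.Adj v w → dz i w < dz i v →
      Near G₀ (dz i v) v (Sum.inr (Sum.inr i)) := by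
    intro v w hv ha hlt
    exact ((Near.of_adj ha).trans (ih (dz i w) (by omega) w le_rfl)).mono (by omega)
  intro v hv
  rcases v with a | a | j
  · rcases descA i a with ⟨b, hb, h⟩ | ⟨j, rfl, h⟩
    · exact step _ (Sum.inl b) hv ((hom1 Hgraph pH qH).map_rel hb) h
    · exact step _ (Sum.inr (Sum.inr j)) hv (adj1 Hgraph pH qH j) h
  · rcases descB i a with ⟨b, hb, h⟩ | ⟨j, rfl, h⟩
    · exact step _ (Sum.inr (Sum.inl b)) hv ((hom2 Hgraph pH qH).map_rel hb) h
    · exact step _ (Sum.inr (Sum.inr j)) hv (adj2 Hgraph pH qH j) h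
  · rcases descC i j with rfl | h | h
    · exact (Near.refl _).mono (Nat.zero_le _)
    · exact step _ (Sum.inl (pH j)) hv (adj1 Hgraph pH qH j).symm h
    · exact step _ (Sum.inr (Sum.inl (qH j))) hv (adj2 Hgraph pH qH j).symm h

theorem dz_le : ∀ (i : Fin 5) (v : Fin 15 ⊕ Fin 15 ⊕ Fin 5), dz i v ≤ 6 := by decide +kernel

theorem dz_pair : ∀ u v : Fin 15 ⊕ Fin 15 ⊕ Fin 5, ∃ i, dz i u + dz i v ≤ 6 := by decide +kernel

/-! Diameter of `G_k`. -/

def hgt : (k : ℕ) → Vt k → ℕ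
  | 0, _ => 0
  | k + 1, Sum.inl v => hgt k v
  | k + 1, Sum.inr (Sum.inl v) => hgt k v
  | k + 1, Sum.inr (Sum.inr _) => k + 1

def prj : (k : ℕ) → Vt k → Fin 15 ⊕ Fin 15 ⊕ Fin 5
  | 0, v => v
  | k + 1, Sum.inl v => prj k v
  | k + 1, Sum.inr (Sum.inl v) => prj k v
  | _ + 1, Sum.inr (Sum.inr i) => Sum.inr (Sum.inr i)

theorem hgt_distV (k : ℕ) (i : Fin 5) : hgt k (distV k i) = k := by
  cases k <;> rfl

theorem prj_distV (k : ℕ) (i : Fin 5) : prj k (distV k i) = Sum.inr (Sum.inr i) := by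
  cases k <;> rfl

theorem up1 (k n : ℕ) (v : Vt k) (i : Fin 5) (h : Near (Gk k) n v (distV k i)) :
    Near (Gk (k + 1)) (n + 1) (Sum.inl v : Vt k ⊕ Vt k ⊕ Fin 5) (distV (k + 1) i) :=
  (h.map (hom1 (Gk k) (distV k) (distV k))).trans
    (Near.of_adj (adj1 (Gk k) (distV k) (distV k) i))

theorem up2 (k n : ℕ) (v : Vt k) (i : Fin 5) (h : Near (Gk k) n v (distV k i)) :
    Near (Gk (k + 1)) (n + 1) (Sum.inr (Sum.inl v) : Vt k ⊕ Vt k ⊕ Fin 5) (distV (k + 1) i) :=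
  (h.map (hom2 (Gk k) (distV k) (distV k))).trans
    (Near.of_adj (adj2 (Gk k) (distV k) (distV k) i))

theorem nearA : ∀ (k : ℕ) (v : Vt k) (i : Fin 5),
    Near (Gk k) (hgt k v + k + dz i (prj k v)) v (distV k i) := by
  intro k
  induction k with
  | zero =>
    intro v i
    exact (near_dz i _ v le_rfl).mono (by simp [prj])
  | succ k ih =>
    intro v i
    rcases v with v | v | j
    · refine (up1 k _ v i (ih v i)).mono ?_
      simp only [hgt, prj]; omega
    · refine (up2 k _ v i (ih v i)).mono ?_
      simp only [hgt, prj]; omega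
    · have h1 := up1 k _ _ i (ih (distV k j) i)
      rw [hgt_distV, prj_distV] at h1
      have h2 : Near (Gk (k + 1)) 1 (Sum.inr (Sum.inr j) : Vt k ⊕ Vt k ⊕ Fin 5)
          (Sum.inl (distV k j) : Vt k ⊕ Vt k ⊕ Fin 5) :=
        (Near.of_adj (adj1 (Gk k) (distV k) (distV k) j)).symm
      refine (h2.trans h1).mono ?_
      simp only [hgt, prj]; omega

theorem nearB : ∀ (k : ℕ) (v : Vt k), 0 < hgt k v →
    ∃ i n, n + hgt k v = k ∧ Near (Gk k) n v (distV k i) := by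
  intro k
  induction k with
  | zero => intro v h; exact absurd h (by simp [hgt])
  | succ k ih =>
    intro v h
    rcases v with v | v | j
    · obtain ⟨i, n, h1, h2⟩ := ih v h
      exact ⟨i, n + 1, by simp only [hgt]; omega, up1 k n v i h2⟩
    · obtain ⟨i, n, h1, h2⟩ := ih v h
      exact ⟨i, n + 1, by simp only [hgt]; omega, up2 k n v i h2⟩
    · exact ⟨j, 0, by simp [hgt], Near.refl _⟩

theorem diam (k : ℕ) : ∀ u v : Vt k, Near (Gk k) (2 * k + 6) u v := by
  have key : ∀ u v : Vt k, 0 < hgt k u → hgt k v ≤ hgt k u → Near (Gk k) (2 * k + 6) u v := by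
    intro u v h1 h2
    obtain ⟨i, n, h3, h4⟩ := nearB k u h1
    have := dz_le i (prj k v)
    exact (h4.trans (nearA k v i).symm).mono (by omega)
  intro u v
  by_cases h0 : hgt k u = 0 ∧ hgt k v = 0
  · obtain ⟨i, hi⟩ := dz_pair (prj k u) (prj k v)
    exact ((nearA k u i).trans (nearA k v i).symm).mono (by omega)
  · rcases le_total (hgt k v) (hgt k u) with h | h
    · exact key u v (by omega) h
    · exact (key v u (by omega) h).symm

theorem count_all : ∀ (k : ℕ) (c : Vt k → ℕ), PC (Gk k) c →
    ∃ S : Finset (Vt k), 4 ≤ S.card ∧ ∀ v ∈ S, 2 * k + 6 ≤ c v := by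
  intro k
  induction k with
  | zero =>
    intro c hc
    exact glue_count Hgraph pH qH 4 H_count near_four c hc
  | succ k ih =>
    intro c hc
    exact glue_count (Gk k) (distV k) (distV k) (2 * k + 6) ih (fun u v _ => diam k u v) c hc

theorem no_coloring (k m : ℕ) (hm : m ≤ 2 * k + 8) (c : Vt k → ℕ) :
    ¬ IsPackingColoring (Gk k) m c := by
  intro h
  have hc := PC.of_coloring h
  obtain ⟨S, h1, h2⟩ := count_all k c hc
  have hinj : Set.InjOn c S := by
    intro a ha b hb hab
    by_contra hne
    exact hc.2 a b hne hab ((diam k a b).mono (h2 a ha))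
  have hle : S.card ≤ (Finset.Icc (2 * k + 6) (2 * k + 8)).card := by
    apply Finset.card_le_card_of_injOn c _ hinj
    intro v hv
    simp only [Finset.coe_Icc, Set.mem_Icc]
    exact ⟨h2 v hv, (h.1 v).2.trans hm⟩
  rw [Nat.card_Icc] at hle
  omega

theorem Vt_finite : ∀ k, Finite (Vt k)
  | 0 => inferInstanceAs (Finite (Fin 15 ⊕ Fin 15 ⊕ Fin 5))
  | k + 1 =>
    haveI := Vt_finite k
    inferInstanceAs (Finite (Vt k ⊕ Vt k ⊕ Fin 5))

theorem exists_coloring (k : ℕ) : ∃ m, ∃ c : Vt k → ℕ, IsPackingColoring (Gk k) m c := by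
  haveI := Vt_finite k
  obtain ⟨n, ⟨e⟩⟩ := Finite.exists_equiv_fin (Vt k)
  refine ⟨n, fun v => (e v : ℕ) + 1, fun v => ⟨Nat.le_add_left _ _, (e v).2⟩, ?_⟩
  intro i _ _ u hu v hv huv
  exfalso
  apply huv
  apply e.injective
  apply Fin.ext
  have hu' : (e u : ℕ) + 1 = i := hu
  have hv' : (e v : ℕ) + 1 = i := hv
  omega

/-- For every positive integer `k`, the packing chromatic number of `G_k` is at
least `2k + 9`; that is, `G_k` admits no `m`-packing coloring for any
`m ≤ 2k + 8`. -/
theorem stmt14 (k : ℕ) (hk : 1 ≤ k) :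
    2 * k + 9 ≤ packingChromaticNumber (Gk k) ∧
    ∀ m ≤ 2 * k + 8, ¬ ∃ c : Vt k → ℕ, IsPackingColoring (Gk k) m c := by
  have hno : ∀ m ≤ 2 * k + 8, ¬ ∃ c : Vt k → ℕ, IsPackingColoring (Gk k) m c := by
    rintro m hm ⟨c, hc⟩
    exact no_coloring k m hm c hc
  refine ⟨?_, hno⟩
  have hmem := Nat.sInf_mem (s := {m | ∃ c : Vt k → ℕ, IsPackingColoring (Gk k) m c})
    (exists_coloring k)
  by_contra hlt
  exact hno _ (by unfold packingChromaticNumber at hlt; omega) hmem
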